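/- Let C be a nonempty closed bounded convex subset of a real Hilbert space H, b ≥ 0, and T : C → C a b-modified enriched nonexpansive mapping, i.e. ‖b(x−y) + Tx − Ty‖ ≤ ‖x−y‖ for all x, y ∈ C. Then T has at least one fixed point in C. -/

import Mathlib

/-!
Averaging `T` with the identity turns the hypothesis into nonexpansiveness: the map
`x ↦ (1 + b)⁻¹ • (b • x + T x)` preserves `C` by convexity, is Lipschitz with constant
`(1 + b)⁻¹ ≤ 1`, and has the same fixed points as `T`.

For a nonexpansive map `T`, Banach's theorem yields `x s ∈ C` with `s • (x s - z) = T (x s) - x s`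
for every `s > 0`. Monotonicity of `1 - T` makes `‖x s - z‖` grow as `s` decreases and bounds
`‖x s - x r‖ ^ 2` by the growth of `‖x s - z‖ ^ 2`. As `C` is bounded, the points `x s` therefore
converge as `s → 0`, and the limit is fixed by `T`.
-/

open Filter Topology AffineMap

theorem cauchySeq_of_dist_sq_le_sub {ι X : Type*} [Nonempty ι] [SemilatticeSup ι]
    [PseudoMetricSpace X] {u : ι → X} {a : ι → ℝ} (ha : BddAbove (Set.range a))
    (h : ∀ m n, m < n → dist (u m) (u n) ^ 2 ≤ a n - a m) : CauchySeq u := by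
  have hmono : Monotone a := monotone_iff_forall_lt.2 fun m n hmn =>
    sub_nonneg.1 ((sq_nonneg _).trans (h m n hmn))
  have hcauchy : CauchySeq a := (tendsto_atTop_ciSup hmono ha).cauchySeq
  refine Metric.cauchySeq_iff'.2 fun ε hε => ?_
  obtain ⟨N, hN⟩ := Metric.cauchySeq_iff'.1 hcauchy (ε ^ 2) (by positivity)
  refine ⟨N, fun n hn => ?_⟩
  rcases hn.eq_or_lt with rfl | hlt
  · rwa [dist_self]
  · rw [dist_comm]
    refine lt_of_pow_lt_pow_left₀ 2 hε.le ?_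
    calc dist (u N) (u n) ^ 2 ≤ a n - a N := h N n hlt
      _ ≤ dist (a n) (a N) := le_abs_self _
      _ < ε ^ 2 := hN n hn

theorem inv_one_add_mem_Icc {s : ℝ} (hs : 0 ≤ s) : (1 + s)⁻¹ ∈ Set.Icc (0 : ℝ) 1 :=
  ⟨by positivity, inv_le_one_of_one_le₀ (by linarith)⟩

section InnerProductSpace

variable {E : Type*} [SeminormedAddCommGroup E] [InnerProductSpace ℝ E]

theorem inner_sub_self_nonpos_of_norm_le {v w : E} (h : ‖v‖ ≤ ‖w‖) : inner ℝ (v - w) w ≤ 0 := by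
  rw [inner_sub_left, sub_nonpos, real_inner_self_eq_norm_mul_norm]
  exact (real_inner_le_norm v w).trans (by gcongr)

theorem norm_sub_sq_le_of_inner_smul_sub_nonpos {r s : ℝ} (hr : 0 ≤ r) (hrs : r < s) {u v : E}
    (h : inner ℝ (s • u - r • v) (u - v) ≤ 0) : ‖u - v‖ ^ 2 ≤ ‖v‖ ^ 2 - ‖u‖ ^ 2 := by
  have hweighted : (s + r) * ‖u - v‖ ^ 2 ≤ (s - r) * (‖v‖ ^ 2 - ‖u‖ ^ 2) := by
    simp only [inner_sub_left, inner_sub_right, real_inner_smul_left,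
      real_inner_self_eq_norm_sq, real_inner_comm u v] at h
    rw [norm_sub_sq_real]
    linarith
  have hsr : 0 < s - r := sub_pos.2 hrs
  refine le_of_mul_le_mul_left (le_trans ?_ hweighted) hsr
  gcongr
  linarith

end InnerProductSpace

section Averaging

variable {E : Type*} [AddCommGroup E] [Module ℝ E] {C : Set E}

/-- The averaged (Krasnoselskii) map `x ↦ (1 - t) • x + t • T x` of a self-map `T` of a convex set,
used to replace `T` by a nonexpansive map with the same fixed points. -/
def averagedMap (hconv : Convex ℝ C) {t : ℝ} (ht : t ∈ Set.Icc (0 : ℝ) 1) (T : C → C) : C → C :=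
  fun x => ⟨lineMap (x : E) (T x : E) t, hconv.lineMap_mem x.2 (T x).2 ht⟩

theorem averagedMap_eq_self_iff (hconv : Convex ℝ C) {t : ℝ} (ht : t ∈ Set.Icc (0 : ℝ) 1)
    (ht₀ : t ≠ 0) (T : C → C) (x : C) : averagedMap hconv ht T x = x ↔ T x = x := by
  rw [Subtype.ext_iff, averagedMap, lineMap_eq_left_iff, or_iff_left ht₀, eq_comm,
    Subtype.ext_iff]

end Averaging

theorem lipschitzWith_averagedMap {E : Type*} [SeminormedAddCommGroup E] [NormedSpace ℝ E]
    {C : Set E} (hconv : Convex ℝ C) {b : ℝ} (hb : 0 ≤ b) {T : C → C}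
    (hT : ∀ x y : C, ‖b • ((x : E) - (y : E)) + ((T x : E) - (T y : E))‖ ≤ ‖(x : E) - (y : E)‖) :
    LipschitzWith (Real.toNNReal (1 + b)⁻¹) (averagedMap hconv (inv_one_add_mem_Icc hb) T) := by
  refine LipschitzWith.of_dist_le' fun x y => ?_
  have hsub : (averagedMap hconv (inv_one_add_mem_Icc hb) T x : E) -
      averagedMap hconv (inv_one_add_mem_Icc hb) T y =
      (1 + b)⁻¹ • (b • ((x : E) - y) + ((T x : E) - T y)) := by
    simp only [averagedMap, lineMap_apply_module]
    match_scalars <;> field_simp <;> ring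
  rw [Subtype.dist_eq, Subtype.dist_eq, dist_eq_norm, dist_eq_norm, hsub,
    norm_smul_of_nonneg (by positivity)]
  gcongr
  exact hT x y

theorem exists_smul_sub_eq_sub_of_lipschitzWith_one {E : Type*} [NormedAddCommGroup E]
    [NormedSpace ℝ E] {C : Set E} (hcomplete : IsComplete C) (hconv : Convex ℝ C) {T : C → C}
    (hT : LipschitzWith 1 T) (z : C) {s : ℝ} (hs : 0 < s) :
    ∃ x : C, s • ((x : E) - z) = T x - x := by
  have hpos : 0 < 1 + s := by linarith
  let G : C → C := fun x =>
    ⟨lineMap (z : E) (T x : E) (1 + s)⁻¹, hconv.lineMap_mem z.2 (T x).2 (inv_one_add_mem_Icc hs.le)⟩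
  have hG : ContractingWith (Real.toNNReal (1 + s)⁻¹) G := by
    refine ⟨Real.toNNReal_lt_one.2 (inv_lt_one_of_one_lt₀ (by linarith)),
      LipschitzWith.of_dist_le' fun x y => ?_⟩
    have hsub : (G x : E) - G y = (1 + s)⁻¹ • ((T x : E) - T y) := by
      simp only [G, lineMap_apply_module]
      module
    rw [Subtype.dist_eq, dist_eq_norm, hsub, norm_smul_of_nonneg (by positivity), ← dist_eq_norm]
    gcongr
    exact (hT.dist_le_mul x y).trans_eq (one_mul _)
  have : CompleteSpace C := hcomplete.completeSpace_coe
  have : Nonempty C := ⟨z⟩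
  obtain ⟨x, hx⟩ : ∃ x, G x = x := ⟨_, hG.fixedPoint_isFixedPt⟩
  refine ⟨x, ?_⟩
  have hline : (1 + s)⁻¹ • ((T x : E) - z) = x - z :=
    eq_sub_of_add_eq ((lineMap_apply_module' ..).symm.trans (congrArg Subtype.val hx))
  rw [inv_smul_eq_iff₀ hpos.ne', add_smul, one_smul] at hline
  rw [← sub_sub_sub_cancel_right (T x : E) x z, hline, add_sub_cancel_left]

section Nonexpansive

variable {E : Type*} [NormedAddCommGroup E] [InnerProductSpace ℝ E] {C : Set E} {T : C → C}

theorem dist_sq_le_of_smul_sub_eq_sub (hT : LipschitzWith 1 T) {z : E} {r s : ℝ} (hr : 0 ≤ r)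
    (hrs : r < s) {x y : C} (hx : s • ((x : E) - z) = T x - x)
    (hy : r • ((y : E) - z) = T y - y) :
    dist x y ^ 2 ≤ ‖(y : E) - z‖ ^ 2 - ‖(x : E) - z‖ ^ 2 := by
  have hnorm : ‖(T x : E) - T y‖ ≤ ‖(x : E) - y‖ := by
    simpa [Subtype.dist_eq, dist_eq_norm] using hT.dist_le_mul x y
  have hmonotone : inner ℝ (s • ((x : E) - z) - r • ((y : E) - z)) ((x - z) - (y - z)) ≤ 0 := by
    rw [hx, hy, sub_sub_sub_cancel_right, sub_sub_sub_comm]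
    exact inner_sub_self_nonpos_of_norm_le hnorm
  have hbound := norm_sub_sq_le_of_inner_smul_sub_nonpos hr hrs hmonotone
  rwa [sub_sub_sub_cancel_right, ← dist_eq_norm] at hbound

theorem exists_fixedPoint_of_lipschitzWith_one (hne : C.Nonempty) (hcomplete : IsComplete C)
    (hbdd : Bornology.IsBounded C) (hconv : Convex ℝ C) (hT : LipschitzWith 1 T) :
    ∃ x : C, T x = x := by
  obtain ⟨z, hz⟩ := hne
  obtain ⟨R, hR⟩ := hbdd.subset_closedBall z
  have hnorm (y : C) : ‖(y : E) - z‖ ≤ R := mem_closedBall_iff_norm.1 (hR y.2)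
  let s : ℕ → ℝ := fun n => 1 / ((n : ℝ) + 1)
  have hs (n : ℕ) : 0 < s n := Nat.one_div_pos_of_nat
  choose x hx using fun n =>
    exists_smul_sub_eq_sub_of_lipschitzWith_one hcomplete hconv hT ⟨z, hz⟩ (hs n)
  have hcauchy : CauchySeq x := by
    refine cauchySeq_of_dist_sq_le_sub (a := fun n => ‖(x n : E) - z‖ ^ 2)
      ⟨R ^ 2, Set.forall_mem_range.2 fun n => by gcongr; exact hnorm (x n)⟩ fun m n hmn => ?_
    exact dist_sq_le_of_smul_sub_eq_sub hT (hs n).le (Nat.one_div_lt_one_div hmn) (hx m) (hx n)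
  have : CompleteSpace C := hcomplete.completeSpace_coe
  obtain ⟨p, hp⟩ := cauchySeq_tendsto_of_complete hcauchy
  have hdisplacement : Tendsto (fun n => (T (x n) : E) - x n) atTop (𝓝 0) := by
    simp only [← hx]
    exact tendsto_one_div_add_atTop_nhds_zero_nat.zero_smul_isBoundedUnder_le
      (isBoundedUnder_of ⟨R, fun n => hnorm (x n)⟩)
  have hcoe : Continuous fun y : C => (T y : E) - y :=
    (continuous_subtype_val.comp hT.continuous).sub continuous_subtype_val
  exact ⟨p, Subtype.ext (sub_eq_zero.1
    (tendsto_nhds_unique ((hcoe.tendsto p).comp hp) hdisplacement))⟩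

end Nonexpansive

theorem modified_enriched_nonexpansive_has_fixedPoint_general
    {H : Type*} [NormedAddCommGroup H] [InnerProductSpace ℝ H]
    (C : Set H) (hne : C.Nonempty) (hcomplete : IsComplete C)
    (hbdd : Bornology.IsBounded C) (hconv : Convex ℝ C)
    (b : ℝ) (hb : 0 ≤ b) (T : C → C)
    (hT : ∀ x y : C, ‖b • ((x : H) - (y : H)) + ((T x : H) - (T y : H))‖ ≤
      ‖(x : H) - (y : H)‖) :
    ∃ x : C, T x = x := by
  have hone : Real.toNNReal (1 + b)⁻¹ ≤ 1 := Real.toNNReal_le_one.2 (inv_one_add_mem_Icc hb).2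
  obtain ⟨x, hx⟩ := exists_fixedPoint_of_lipschitzWith_one hne hcomplete hbdd hconv
    ((lipschitzWith_averagedMap hconv hb hT).weaken hone)
  have hpos : 0 < 1 + b := by linarith
  exact ⟨x, (averagedMap_eq_self_iff hconv _ (inv_ne_zero hpos.ne') T x).1 hx⟩

/-- A `b`-modified enriched nonexpansive self-mapping of a nonempty closed bounded
convex subset of a real Hilbert space has at least one fixed point. -/
theorem modified_enriched_nonexpansive_has_fixedPoint
    {H : Type*} [NormedAddCommGroup H] [InnerProductSpace ℝ H] [CompleteSpace H]
    (C : Set H) (hne : C.Nonempty) (hclosed : IsClosed C)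
    (hbdd : Bornology.IsBounded C) (hconv : Convex ℝ C)
    (b : ℝ) (hb : 0 ≤ b) (T : C → C)
    (hT : ∀ x y : C, ‖b • ((x : H) - (y : H)) + ((T x : H) - (T y : H))‖ ≤
      ‖(x : H) - (y : H)‖) :
    ∃ x : C, T x = x :=
  modified_enriched_nonexpansive_has_fixedPoint_general C hne hclosed.isComplete hbdd hconv b hb
    T hT
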